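/- Let K be a Hopf subalgebra of H and C a simple subcoalgebra of H. Then {}^C K ⊆ C·K·S(C), where S is the antipode of H (so S(C) is the simple subcoalgebra C* dual to C). -/

import Mathlib

open TensorProduct

namespace MackeyPaper

noncomputable section

universe v

variable (k : Type) [Field k] [CharZero k] [IsAlgClosed k]
variable (H : Type) [Ring H] [HopfAlgebra k H]

/-- A subcoalgebra of `H`: a `k`-subspace `C` with `Δ(C) ⊆ C ⊗ C`. -/
def IsSubcoalgebra (C : Submodule k H) : Prop :=
  ∀ c ∈ C, Coalgebra.comul (R := k) c ∈
    LinearMap.range (TensorProduct.map C.subtype C.subtype)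

/-- A simple (nonzero, minimal) subcoalgebra of `H`. -/
def IsSimpleSubcoalgebra (C : Submodule k H) : Prop :=
  IsSubcoalgebra k H C ∧ C ≠ ⊥ ∧
    ∀ D : Submodule k H, D ≤ C → IsSubcoalgebra k H D → D ≠ ⊥ → D = C

/-- A Hopf subalgebra of `H`: a subalgebra which is a subcoalgebra and is
stable under the antipode. -/
def IsHopfSubalgebra (K : Subalgebra k H) : Prop :=
  IsSubcoalgebra k H K.toSubmodule ∧ ∀ x ∈ K, HopfAlgebra.antipode (R := k) x ∈ K

/-- `Λ` is the (two-sided) idempotent integral of the Hopf subalgebra `K`,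
i.e. the integral normalized by `ε(Λ) = 1`. -/
def IsIdempotentIntegral (K : Subalgebra k H) (Λ : H) : Prop :=
  Λ ∈ K ∧ Coalgebra.counit (R := k) Λ = 1 ∧
    ∀ x ∈ K, x * Λ = Coalgebra.counit (R := k) x • Λ ∧
      Λ * x = Coalgebra.counit (R := k) x • Λ

/-- A cocommutative element of `H`; the cocommutative elements of `H` form
the character ring `C(H^*)`. -/
def IsCocomm (x : H) : Prop :=
  (TensorProduct.comm k H H) (Coalgebra.comul (R := k) x) = Coalgebra.comul (R := k) x

/-- The character ring `C(H^*)`, i.e. the space of cocommutative elements of `H`,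
as a `k`-subspace of `H`. -/
def charRing : Submodule k H :=
  LinearMap.ker ((TensorProduct.comm k H H).toLinearMap ∘ₗ Coalgebra.comul (R := k)
      - Coalgebra.comul (R := k))

/-- `d` is the irreducible character (of `H^*`) associated to the simple
subcoalgebra `C`: the unique cocommutative element of `C` whose counit is the
positive square root of `dim_k C`. -/
def IsCharacterOf (d : H) (C : Submodule k H) : Prop :=
  d ∈ C ∧ IsCocomm k H d ∧
    Coalgebra.counit (R := k) d = ((Nat.sqrt (Module.finrank k ↥C) : ℕ) : k)

/-- The right coset `CK` of a subcoalgebra `C`, i.e. the subspace `C·K`. -/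
def CKsub (K : Subalgebra k H) (C : Submodule k H) : Submodule k H :=
  C * K.toSubmodule

/-- The conjugate Hopf subalgebra `ᶜK` of `K` by a simple subcoalgebra `C`
(with associated irreducible character `c`): the span of all simple
subcoalgebras of `H` whose irreducible character `d` satisfies
`d·c·Λ_K = ε(d)·c·Λ_K`.  (The condition is stated for all cocommutative
elements of `C` resp. `D`; this is equivalent, since the cocommutative
elements of a simple subcoalgebra are exactly the scalar multiples of its
irreducible character.) -/
def conjK (K : Subalgebra k H) (Λ : H) (C : Submodule k H) : Submodule k H :=
  sSup {D : Submodule k H | IsSimpleSubcoalgebra k H D ∧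
    ∀ d ∈ D, IsCocomm k H d → ∀ c ∈ C, IsCocomm k H c →
      d * (c * Λ) = Coalgebra.counit (R := k) d • (c * Λ)}

/-- A complete irredundant system of representatives (by simple subcoalgebras)
of the double cosets `L\H/K`.  (Taking `L = ⊥` gives a system of
representatives of the right cosets `H/K`.) -/
def IsDoubleCosetReps (L K : Subalgebra k H) {ι : Type} (rep : ι → Submodule k H) : Prop :=
  (∀ i, IsSimpleSubcoalgebra k H (rep i)) ∧
  (∀ i j, L.toSubmodule * rep i * K.toSubmodule = L.toSubmodule * rep j * K.toSubmodule
      → i = j) ∧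
  (∀ C : Submodule k H, IsSimpleSubcoalgebra k H C →
      ∃ i, C ≤ L.toSubmodule * rep i * K.toSubmodule)

section Ind

variable (K : Subalgebra k H) (M : Type v) [AddCommGroup M] [Module k M]
  [Module ↥K M] [IsScalarTower k ↥K M]

/-- The relations defining the induced module `H ⊗_K M` as a quotient of
`H ⊗_k M`: the `H`-submodule generated by the elements `a ⊗ m - 1 ⊗ a·m`
for `a ∈ K` (equivalently, spanned by all `h·a ⊗ m - h ⊗ a·m`). -/
def indRel : Submodule H (H ⊗[k] M) :=
  Submodule.span H {z | ∃ (a : ↥K) (m : M),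
    z = (a : H) ⊗ₜ[k] m - (1 : H) ⊗ₜ[k] (a • m)}

/-- The induced module `M↑_K^H = H ⊗_K M`, a left `H`-module. -/
abbrev Ind := (H ⊗[k] M) ⧸ indRel k H K M

variable (C : Submodule k H)

/-- The underlying space `CK ⊗_k M` of which the conjugate module `ᶜM` is a
quotient. -/
def CKM : Type _ := ↥(CKsub k H K C) ⊗[k] M

instance : AddCommGroup (CKM k H K M C) :=
  inferInstanceAs (AddCommGroup (↥(CKsub k H K C) ⊗[k] M))

instance : Module k (CKM k H K M C) :=
  inferInstanceAs (Module k (↥(CKsub k H K C) ⊗[k] M))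

/-- The pure tensor `x ⊗ m` as an element of `CK ⊗_k M`. -/
def ckmk (x : ↥(CKsub k H K C)) (m : M) : CKM k H K M C := x ⊗ₜ[k] m

/-- The relations defining the conjugate module `ᶜM = CK ⊗_K M` as a quotient
of `CK ⊗_k M`: `x·a ⊗ m - x ⊗ a·m` for `a ∈ K`. -/
def conjRel : Submodule k (CKM k H K M C) :=
  Submodule.span k {z | ∃ (x : ↥(CKsub k H K C)) (a : ↥K) (m : M)
    (hxa : (x : H) * (a : H) ∈ CKsub k H K C),
    z = ckmk k H K M C ⟨(x : H) * (a : H), hxa⟩ m - ckmk k H K M C x (a • m)}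

/-- The conjugate module `ᶜM := CK ⊗_K M`. -/
abbrev ConjM := CKM k H K M C ⧸ conjRel k H K M C

/-- The canonical copy of the conjugate module `ᶜM = CK ⊗_K M` inside
`H ⊗_K M` (the image of `CK ⊗_K M` under multiplication; this is indeed a
copy of `ᶜM` since `H` is a free right `K`-module and `CK` is one of the
coset summands). -/
def conjMsub : Submodule k (Ind k H K M) :=
  Submodule.span k {z | ∃ (x : H) (_ : x ∈ CKsub k H K C) (m : M),
    z = Submodule.Quotient.mk (x ⊗ₜ[k] m)}

end Ind

section Comp

variable (L K : Subalgebra k H) (Λ : H) (C : Submodule k H)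
variable (M : Type v) [AddCommGroup M] [Module k M] [Module ↥K M] [IsScalarTower k ↥K M]

/-- The underlying space `L ⊗_k (CK ⊗_k M)`. -/
def LCM : Type _ := ↥L ⊗[k] CKM k H K M C

instance : AddCommGroup (LCM k H L K C M) :=
  inferInstanceAs (AddCommGroup (↥L ⊗[k] CKM k H K M C))

instance : Module k (LCM k H L K C M) :=
  inferInstanceAs (Module k (↥L ⊗[k] CKM k H K M C))

/-- The pure tensor `l ⊗ w` as an element of `L ⊗_k (CK ⊗_k M)`. -/
def lcmk (l : ↥L) (w : CKM k H K M C) : LCM k H L K C M := l ⊗ₜ[k] w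

/-- The relations defining `L ⊗_{L ∩ ᶜK} ᶜM` as a quotient of
`L ⊗_k (CK ⊗_k M)`: the balancedness relations over `L ∩ ᶜK` (first set),
together with (the image of) the relations defining `ᶜM = CK ⊗_K M`
(second set). -/
def compRel : Submodule k (LCM k H L K C M) :=
  Submodule.span k
    ({z | ∃ (l : ↥L) (a : H) (haL : a ∈ L) (_ : a ∈ conjK k H K Λ C)
        (x : ↥(CKsub k H K C)) (m : M) (hax : a * (x : H) ∈ CKsub k H K C),
        z = lcmk k H L K C M ⟨(l : H) * a, mul_mem l.2 haL⟩ (ckmk k H K M C x m)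
          - lcmk k H L K C M l (ckmk k H K M C ⟨a * (x : H), hax⟩ m)} ∪
     {z | ∃ (l : ↥L) (x : ↥(CKsub k H K C)) (a : ↥K) (m : M)
        (hxa : (x : H) * (a : H) ∈ CKsub k H K C),
        z = lcmk k H L K C M l (ckmk k H K M C ⟨(x : H) * (a : H), hxa⟩ m)
          - lcmk k H L K C M l (ckmk k H K M C x (a • m))})

/-- The module `L ⊗_{L ∩ ᶜK} ᶜM` (a left `L`-module via multiplication on the
first tensor factor). -/
abbrev Comp := LCM k H L K C M ⧸ compRel k H L K Λ C M

end Comp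

open DirectSum

section Mackey

variable (L K : Subalgebra k H) (Λ : H)

/-- The Mackey isomorphism property for the pair `(L, K)` at the `K`-module
`M`: for any system of double coset representatives, the left-multiplication
map `⊕_C L ⊗_{L ∩ ᶜK} ᶜM → M↑_K^H↓_L^H`, `l ⊗ v ↦ l·v`, is an isomorphism of
`L`-modules.  (A `k`-linear map satisfying the displayed formula on the
spanning elements is automatically `L`-equivariant for the evident
`L`-actions, so this property is stated for `k`-linear maps.) -/
def MackeyAt (M : Type v) [AddCommGroup M] [Module k M] [Module ↥K M]
    [IsScalarTower k ↥K M] [Module.Finite k M] : Prop :=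
  ∀ (ι : Type) [DecidableEq ι] (rep : ι → Submodule k H),
    IsDoubleCosetReps k H L K rep →
    ∃ π : (⨁ i : ι, Comp k H L K Λ (rep i) M) →ₗ[k] Ind k H K M,
      Function.Bijective π ∧
      ∀ (i : ι) (l : ↥L) (x : ↥(CKsub k H K (rep i))) (m : M),
        π (DirectSum.of (fun i => Comp k H L K Λ (rep i) M) i
            (Submodule.Quotient.mk (lcmk k H L K (rep i) M l (ckmk k H K M (rep i) x m)))) =
          Submodule.Quotient.mk (((l : H) * (x : H)) ⊗ₜ[k] m)

/-- `(L, K)` is a Mackey pair of Hopf subalgebras of `H` (here `Λ` is the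
idempotent integral of `K`): for every finite-dimensional `K`-module `M` the
left-multiplication homomorphism `π_M` is an isomorphism. -/
def IsMackeyPair : Prop :=
  ∀ (M : Type v) [AddCommGroup M] [Module k M] [Module ↥K M]
    [IsScalarTower k ↥K M] [Module.Finite k M], MackeyAt k H L K Λ M

end Mackey

/-!
Let `D` be a simple subcoalgebra occurring in `ᶜK`, and let `m` and `n` be matrices of coefficients
of nonzero comodules over `D` and over `C`. The functionals on `H` that vanish on `CK` and are
invariant under right translation by `K` form a convolution algebra, which acts on the comodule
with coefficient matrix `m ⊗ n`. The condition defining `ᶜK`, applied to the cocommutative elements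
`tr m` and `tr n`, says that every such functional acts with trace zero. In characteristic zero an
algebra of matrices of trace zero consists of nilpotent matrices, so by Engel's theorem it kills a
common nonzero vector `w`. If `g` vanishes on `CK`, then `g(· Λ)` is such a functional; hence the
combination `z` of the rows of `m ⊗ n` with coefficients `w` satisfies `zΛ ∈ CK`, and the antipode
axiom upgrades this to `z ∈ CK`. Multiplying by the inverse `S(n)` of the matrix `n` turns `z` into
a nonzero element of `D ∩ CK·S(C)`, and `D` is simple.
-/

section TraceZero

open Polynomial

theorem exists_isIdempotentElem_aeval_X_mul {k A : Type*} [Field k] [Ring A] [Algebra k A] {a : A}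
    (ha : IsIntegral k a) :
    ∃ (q : k[X]) (n : ℕ),
      IsIdempotentElem (aeval a (X * q)) ∧ a ^ n * aeval a (X * q) = a ^ n := by
  obtain ⟨g, hg, hdvd⟩ :=
    (minpoly k a).exists_eq_pow_rootMultiplicity_mul_and_not_dvd (minpoly.ne_zero ha) 0
  rw [map_zero, sub_zero] at hg hdvd
  set r := (minpoly k a).rootMultiplicity 0
  obtain ⟨u, v, huv⟩ : IsCoprime (X ^ (r + 1)) g :=
    (irreducible_X.coprime_iff_not_dvd.mpr hdvd).pow_left
  have hzero : aeval a (X ^ (r + 1) * g) = 0 := by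
    rw [pow_succ', mul_assoc, ← hg, map_mul, minpoly.aeval, mul_zero]
  refine ⟨X ^ r * u, r + 1, ?_, ?_⟩
  · have h : X * (X ^ r * u) * (X * (X ^ r * u)) =
        X * (X ^ r * u) - u * v * (X ^ (r + 1) * g) := by
      linear_combination (u * X ^ (r + 1)) * huv
    rw [IsIdempotentElem, ← map_mul, h, map_sub, map_mul _ (u * v), hzero, mul_zero, sub_zero]
  · have h : X ^ (r + 1) * (X * (X ^ r * u)) = X ^ (r + 1) - v * (X ^ (r + 1) * g) := by
      linear_combination X ^ (r + 1) * huv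
    rw [← aeval_X_pow (R := k) a, ← map_mul, h, map_sub, map_mul _ v, hzero, mul_zero, sub_zero]

theorem aeval_X_mul_mem {k A : Type*} [CommSemiring k] [Semiring A] [Algebra k A]
    {J : NonUnitalSubalgebra k A} {a : A} (ha : a ∈ J) (q : k[X]) : aeval a (X * q) ∈ J := by
  have hpow (n : ℕ) : a ^ (n + 1) ∈ J := by
    induction n with
    | zero => rwa [zero_add, pow_one]
    | succ n ih => rw [pow_succ]; exact mul_mem ih ha
  induction q using Polynomial.induction_on' with
  | add p q hp hq => rw [mul_add, map_add]; exact add_mem hp hq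
  | monomial n c =>
    rw [X_mul_monomial, aeval_monomial, ← Algebra.smul_def]
    exact SMulMemClass.smul_mem c (hpow n)

variable {k V : Type*} [Field k] [CharZero k] [AddCommGroup V] [Module k V] [FiniteDimensional k V]

theorem isNilpotent_of_forall_trace_eq_zero {J : NonUnitalSubalgebra k (Module.End k V)}
    (htr : ∀ a ∈ J, LinearMap.trace k V a = 0) {a : Module.End k V} (ha : a ∈ J) :
    IsNilpotent a := by
  obtain ⟨q, n, hidem, hpow⟩ :=
    exists_isIdempotentElem_aeval_X_mul (Algebra.IsIntegral.isIntegral (R := k) a)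
  have hzero : aeval a (X * q) = 0 :=
    LinearMap.IsIdempotentElem.eq_zero_of_trace_eq_zero hidem (htr _ (aeval_X_mul_mem ha q))
  exact ⟨n, by rw [← hpow, hzero, mul_zero]⟩

theorem exists_ne_zero_forall_apply_eq_zero_of_trace_eq_zero [Nontrivial V]
    {J : NonUnitalSubalgebra k (Module.End k V)} (htr : ∀ a ∈ J, LinearMap.trace k V a = 0) :
    ∃ v : V, v ≠ 0 ∧ ∀ a ∈ J, a v = 0 := by
  let _ : LieRing (Module.End k V) := LieRing.ofAssociativeRing
  let L : LieSubalgebra k (Module.End k V) :=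
    { J.toSubmodule with
      lie_mem' := fun {a b} ha hb => by
        rw [Ring.lie_def]
        exact J.sub_mem (J.mul_mem ha hb) (J.mul_mem hb ha) }
  have hL : LieModule.IsNilpotent L V :=
    (LieModule.isNilpotent_iff_forall' (R := k)).mpr fun a =>
      isNilpotent_of_forall_trace_eq_zero htr a.2
  obtain ⟨v, hv⟩ := @exists_ne _ (LieModule.nontrivial_max_triv_of_isNilpotent k L V) 0
  exact ⟨v, Subtype.coe_ne_coe.mpr hv, fun a ha =>
    (LieModule.mem_maxTrivSubmodule k L V (v : V)).mp v.2 ⟨a, ha⟩⟩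

open scoped Matrix in
theorem exists_ne_zero_forall_vecMul_eq_zero_of_trace_eq_zero {ι : Type*} [Fintype ι] [Nonempty ι]
    {J : NonUnitalSubalgebra k (Matrix ι ι k)} (htr : ∀ A ∈ J, A.trace = 0) :
    ∃ w : ι → k, w ≠ 0 ∧ ∀ A ∈ J, w ᵥ* A = 0 := by
  classical
  let J' : NonUnitalSubalgebra k (Module.End k (ι → k)) :=
    (J.toSubmodule.comap ((Matrix.transposeLinearEquiv ι ι k k).toLinearMap ∘ₗ
      LinearMap.toMatrix'.toLinearMap)).toNonUnitalSubalgebra fun S T hS hT => by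
        change (LinearMap.toMatrix' (S * T))ᵀ ∈ J
        rw [LinearMap.toMatrix'_mul, Matrix.transpose_mul]
        exact mul_mem hT hS
  have hJ' : ∀ T ∈ J', LinearMap.trace k (ι → k) T = 0 := fun T hT => by
    rw [LinearMap.trace_eq_matrix_trace k (Pi.basisFun k ι), ← Matrix.trace_transpose]
    exact htr _ hT
  obtain ⟨w, hw, hw0⟩ := exists_ne_zero_forall_apply_eq_zero_of_trace_eq_zero hJ'
  refine ⟨w, hw, fun A hA => ?_⟩
  rw [← Matrix.mulVec_transpose, ← Matrix.toLin'_apply]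
  refine hw0 _ ?_
  change (LinearMap.toMatrix' (Matrix.toLin' Aᵀ))ᵀ ∈ J
  rwa [LinearMap.toMatrix'_toLin', Matrix.transpose_transpose]

end TraceZero

section Slice

variable {k V W : Type*} [CommSemiring k] [AddCommMonoid V] [Module k V] [AddCommMonoid W]
  [Module k W]

/-- The left slice map `f ⊗ id : V ⊗ W → W` of a functional `f` on `V`. -/
def sliceLeft (f : V →ₗ[k] k) : V ⊗[k] W →ₗ[k] W :=
  (TensorProduct.lid k W).toLinearMap ∘ₗ f.rTensor W

/-- The right slice map `id ⊗ f : V ⊗ W → V` of a functional `f` on `W`. -/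
def sliceRight (f : W →ₗ[k] k) : V ⊗[k] W →ₗ[k] V :=
  (TensorProduct.rid k V).toLinearMap ∘ₗ f.lTensor V

@[simp]
theorem sliceLeft_tmul (f : V →ₗ[k] k) (v : V) (w : W) :
    sliceLeft f (v ⊗ₜ[k] w) = f v • w := rfl

@[simp]
theorem sliceRight_tmul (f : W →ₗ[k] k) (v : V) (w : W) :
    sliceRight f (v ⊗ₜ[k] w) = f w • v := rfl

variable {A : Type*} [AddCommMonoid A] [Module k A] [Coalgebra k A]

theorem comul_sliceLeft_comul (f : A →ₗ[k] k) (x : A) :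
    Coalgebra.comul (R := k) (sliceLeft f (Coalgebra.comul x)) =
      (sliceLeft f ∘ₗ Coalgebra.comul).rTensor A (Coalgebra.comul x) := by
  have hl (t : A ⊗[k] A) : Coalgebra.comul (R := k) (sliceLeft f t) =
      sliceLeft f (Coalgebra.comul.lTensor A t) := by
    induction t with
    | zero => simp only [map_zero]
    | add s t hs ht => simp only [map_add, hs, ht]
    | tmul a b => simp only [sliceLeft_tmul, LinearMap.lTensor_tmul, map_smul]
  have hr : sliceLeft f ∘ₗ (TensorProduct.assoc k A A A).toLinearMap =
      (sliceLeft f).rTensor A :=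
    TensorProduct.ext_threefold fun _ _ _ => rfl
  rw [hl, ← Coalgebra.coassoc_apply, LinearMap.rTensor_comp_apply, ← hr]
  rfl

theorem comul_sliceRight_comul (f : A →ₗ[k] k) (x : A) :
    Coalgebra.comul (R := k) (sliceRight f (Coalgebra.comul x)) =
      (sliceRight f ∘ₗ Coalgebra.comul).lTensor A (Coalgebra.comul x) := by
  have hr (t : A ⊗[k] A) : Coalgebra.comul (R := k) (sliceRight f t) =
      sliceRight f (Coalgebra.comul.rTensor A t) := by
    induction t with
    | zero => simp only [map_zero]
    | add s t hs ht => simp only [map_add, hs, ht]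
    | tmul a b => simp only [sliceRight_tmul, LinearMap.rTensor_tmul, map_smul]
  have hl : (sliceRight f).lTensor A ∘ₗ (TensorProduct.assoc k A A A).toLinearMap =
      sliceRight f :=
    TensorProduct.ext_threefold fun a b c => by simp
  rw [hr, LinearMap.lTensor_comp_apply, ← Coalgebra.coassoc_apply, ← hl]
  rfl

end Slice

section LinearIndependence

variable {k V W : Type*} [Field k] [AddCommGroup V] [Module k V] [AddCommGroup W] [Module k W]

theorem exists_dual_family {ι : Type*} [DecidableEq ι] {v : ι → V} (hv : LinearIndependent k v) :
    ∃ f : ι → V →ₗ[k] k, ∀ i j, f i (v j) = (1 : Matrix ι ι k) i j := by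
  obtain ⟨r, hr⟩ := (Finsupp.linearCombination k v).exists_leftInverse_of_injective
    (LinearMap.ker_eq_bot.mpr hv)
  refine ⟨fun i => Finsupp.lapply i ∘ₗ r, fun i j => ?_⟩
  have hj : r (v j) = Finsupp.single j 1 := by
    simpa using LinearMap.congr_fun hr (Finsupp.single j 1)
  simp [hj, Finsupp.single_apply, Matrix.one_apply, eq_comm]

theorem exists_linearIndependent_left_sum_tmul (t : V ⊗[k] W) :
    ∃ (n : ℕ) (v : Fin n → V) (w : Fin n → W),
      LinearIndependent k v ∧ t = ∑ i, v i ⊗ₜ w i := by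
  obtain ⟨V', hV', hsub⟩ :=
    TensorProduct.exists_finite_submodule_left_of_setFinite {t} (Set.finite_singleton t)
  obtain ⟨s, rfl⟩ := hsub rfl
  let e := Module.finBasis k V'
  obtain ⟨w, rfl⟩ := TensorProduct.eq_repr_basis_left e s
  refine ⟨_, fun i => e i, w, e.linearIndependent.map' V'.subtype V'.ker_subtype, ?_⟩
  rw [Finsupp.sum_fintype _ _ fun i => tmul_zero _ _, map_sum]
  rfl

theorem linearIndependent_sum_repr_smul {ι κ : Type*} [Fintype ι] [Finite κ] {v : ι → V}
    (hv : LinearIndependent k v) {w : ι → W} (hw : Submodule.span k (Set.range w) = ⊤)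
    (e : Module.Basis κ k W) : LinearIndependent k fun j => ∑ i, e.repr (w i) j • v i := by
  have := Fintype.ofFinite κ
  rw [Fintype.linearIndependent_iff] at hv ⊢
  intro c hc
  have hφw (i : ι) : e.constr k c (w i) = 0 := by
    rw [Module.Basis.constr_apply_fintype]
    refine hv (fun i => ∑ j, e.equivFun (w i) j • c j) ?_ i
    simp only [Finset.smul_sum, smul_smul, Finset.sum_smul] at hc ⊢
    rw [Finset.sum_comm, ← hc]
    simp only [e.equivFun_apply, smul_eq_mul, mul_comm]
  have hφ : e.constr k c = 0 := LinearMap.ext_on_range hw hφw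
  intro j
  rw [← Module.Basis.constr_basis e k c j, hφ, LinearMap.zero_apply]

theorem exists_linearIndependent_sum_tmul (t : V ⊗[k] W) :
    ∃ (n : ℕ) (v : Fin n → V) (w : Fin n → W),
      LinearIndependent k v ∧ LinearIndependent k w ∧ t = ∑ i, v i ⊗ₜ w i := by
  obtain ⟨n, v, w, hv, rfl⟩ := exists_linearIndependent_left_sum_tmul t
  let W' := Submodule.span k (Set.range w)
  have : Module.Finite k W' := .span_of_finite k (Set.finite_range w)
  let e := Module.finBasis k W'
  let w' (i : Fin n) : W' := ⟨w i, Submodule.subset_span ⟨i, rfl⟩⟩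
  have hw' : Submodule.span k (Set.range w') = ⊤ :=
    (Submodule.span_range_subtype_eq_top_iff W' _).mpr rfl
  have he (i : Fin n) : w i = ∑ j, e.repr (w' i) j • (e j : W) := by
    conv_lhs => rw [show w i = (w' i : W) from rfl, ← e.sum_repr (w' i)]
    simp only [Submodule.coe_sum, Submodule.coe_smul]
  refine ⟨_, fun j => ∑ i, e.repr (w' i) j • v i, fun j => e j,
    linearIndependent_sum_repr_smul hv hw' e,
    e.linearIndependent.map' W'.subtype W'.ker_subtype, ?_⟩
  calc ∑ i, v i ⊗ₜ w i = ∑ i, ∑ j, e.repr (w' i) j • v i ⊗ₜ[k] (e j : W) := by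
        refine Finset.sum_congr rfl fun i _ => ?_
        conv_lhs => rw [he i]
        simp only [TensorProduct.tmul_sum, TensorProduct.tmul_smul]
    _ = ∑ j, (∑ i, e.repr (w' i) j • v i) ⊗ₜ[k] (e j : W) := by
        rw [Finset.sum_comm]
        simp only [TensorProduct.sum_tmul, ← TensorProduct.smul_tmul']

end LinearIndependence

theorem mul'_mem_mul_of_mem_map₂ {k A : Type*} [Field k] [Ring A] [Algebra k A]
    {P Q : Submodule k A} {t : A ⊗[k] A}
    (hP : t ∈ Submodule.map₂ (TensorProduct.mk k A A) P ⊤)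
    (hQ : t ∈ Submodule.map₂ (TensorProduct.mk k A A) ⊤ Q) : LinearMap.mul' k A t ∈ P * Q := by
  obtain ⟨r, hr⟩ := Q.subtype.exists_leftInverse_of_injective Q.ker_subtype
  have hrt : (Q.subtype ∘ₗ r).lTensor A t = t := by
    have h : Submodule.map₂ (TensorProduct.mk k A A) ⊤ Q ≤
        LinearMap.eqLocus ((Q.subtype ∘ₗ r).lTensor A) .id :=
      Submodule.map₂_le.mpr fun a _ q hq =>
        congrArg (fun q : Q => a ⊗ₜ[k] (q : A)) (LinearMap.congr_fun hr ⟨q, hq⟩)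
    exact h hQ
  have hmul : Submodule.map₂ (TensorProduct.mk k A A) P ⊤ ≤
      (P * Q).comap (LinearMap.mul' k A ∘ₗ (Q.subtype ∘ₗ r).lTensor A) :=
    Submodule.map₂_le.mpr fun _ hp b _ => Submodule.mul_mem_mul hp (r b).2
  rw [← hrt]
  exact hmul hP

theorem mul'_map_mul_of_mem_map₂ {k H : Type*} [CommSemiring k] [Semiring H] [Bialgebra k H]
    {P : Submodule k H} {f g : H →ₗ[k] k}
    (hf : ∀ h, ∀ a ∈ P, f (h * a) = f h * Coalgebra.counit (R := k) a)
    (hg : ∀ h, ∀ a ∈ P, g (h * a) = g h * Coalgebra.counit (R := k) a)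
    (s : H ⊗[k] H) {t : H ⊗[k] H} (ht : t ∈ Submodule.map₂ (TensorProduct.mk k H H) P P) :
    LinearMap.mul' k k (TensorProduct.map f g (s * t)) =
      LinearMap.mul' k k (TensorProduct.map f g s) *
        LinearMap.mul' k k (TensorProduct.map Coalgebra.counit Coalgebra.counit t) := by
  let fg := LinearMap.mul' k k ∘ₗ TensorProduct.map f g
  let εε := LinearMap.mul' k k ∘ₗ
    TensorProduct.map (Coalgebra.counit (R := k) (A := H)) (Coalgebra.counit (R := k) (A := H))
  have hle : Submodule.map₂ (TensorProduct.mk k H H) P P ≤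
      LinearMap.eqLocus (fg ∘ₗ LinearMap.mulLeft k s) (LinearMap.mulLeft k (fg s) ∘ₗ εε) := by
    refine Submodule.map₂_le.mpr fun x hx y hy => ?_
    change fg (s * x ⊗ₜ y) = fg s * εε (x ⊗ₜ y)
    induction s with
    | zero => simp only [zero_mul, map_zero]
    | add s s' hs hs' => simp only [map_add, add_mul, hs, hs']
    | tmul u v =>
      simp only [fg, εε, LinearMap.comp_apply, Algebra.TensorProduct.tmul_mul_tmul,
        TensorProduct.map_tmul, LinearMap.mul'_apply, hf u x hx, hg v y hy]
      exact mul_mul_mul_comm _ _ _ _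
  exact hle ht

section Comatrix

open scoped Kronecker

/-- A comatrix: a square matrix over a coalgebra with `Δ(mᵢⱼ) = ∑ₗ mᵢₗ ⊗ mₗⱼ` and `ε(mᵢⱼ) = δᵢⱼ`,
that is, the matrix of coefficients of a finite-dimensional comodule in a basis. -/
structure IsComatrix (k : Type*) {A ι : Type*} [CommSemiring k] [AddCommMonoid A] [Module k A]
    [Coalgebra k A] [Fintype ι] [DecidableEq ι] (m : Matrix ι ι A) : Prop where
  comul : ∀ i j, Coalgebra.comul (R := k) (m i j) = ∑ l, m i l ⊗ₜ[k] m l j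
  counit : ∀ i j, Coalgebra.counit (R := k) (m i j) = (1 : Matrix ι ι k) i j

namespace IsComatrix

variable {ι κ : Type*} [Fintype ι] [DecidableEq ι] [Fintype κ] [DecidableEq κ]

theorem of_linearIndependent {k A : Type*} [Field k] [AddCommGroup A] [Module k A]
    [Coalgebra k A] {e : ι → A} (he : LinearIndependent k e) {m : Matrix ι ι A}
    (h : ∀ j, Coalgebra.comul (R := k) (e j) = ∑ i, e i ⊗ₜ[k] m i j) : IsComatrix k m := by
  obtain ⟨f, hf⟩ := exists_dual_family he
  have hm (i j : ι) : m i j = sliceLeft (f i) (Coalgebra.comul (e j)) := by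
    simp [h, hf, Matrix.one_apply]
  refine ⟨fun i j => ?_, fun i j => ?_⟩
  · rw [hm i j, comul_sliceLeft_comul, h j]
    simp only [map_sum, LinearMap.rTensor_tmul, LinearMap.comp_apply, ← hm]
  · have hcounit := congrArg (f i ∘ₗ (TensorProduct.rid k A).toLinearMap)
      (Coalgebra.lTensor_counit_comul (R := k) (e j))
    simpa [h, hf, Matrix.one_apply] using hcounit

section Dual

variable {k A : Type*} [CommSemiring k] [AddCommMonoid A] [Module k A] [Coalgebra k A]
  {m : Matrix ι ι A}

/-- The representation of the convolution algebra `A →ₗ[k] k` on the comodule with comatrix `m`,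
in matrix form. -/
def dualRep (hm : IsComatrix k m) : WithConv (A →ₗ[k] k) →ₐ[k] Matrix ι ι k :=
  AlgHom.ofLinearMap
    { toFun := fun f => m.map f
      map_add' := fun _ _ => rfl
      map_smul' := fun _ _ => rfl }
    (by
      change m.map (1 : WithConv (A →ₗ[k] k)) = 1
      ext i j
      simp [hm.counit])
    (fun f g => by
      change m.map (f * g) = m.map f * m.map g
      ext i j
      simp [hm.comul, Matrix.mul_apply])

end Dual

theorem exists_ne_zero_forall_apply_sum_smul_eq_zero {k A : Type*} [Field k] [CharZero k]
    [AddCommGroup A] [Module k A] [Coalgebra k A] [Nonempty ι] {m : Matrix ι ι A}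
    (hm : IsComatrix k m) {J : NonUnitalSubalgebra k (WithConv (A →ₗ[k] k))}
    (htr : ∀ f ∈ J, f m.trace = 0) :
    ∃ w : ι → k, w ≠ 0 ∧ ∀ f ∈ J, ∀ b, f (∑ a, w a • m a b) = 0 := by
  have htrace : ∀ M ∈ J.map hm.dualRep, M.trace = 0 := by
    rintro _ ⟨f, hf, rfl⟩
    change (m.map f).trace = 0
    rw [← htr f hf]
    simp [Matrix.trace]
  obtain ⟨w, hw, hJ⟩ := exists_ne_zero_forall_vecMul_eq_zero_of_trace_eq_zero htrace
  refine ⟨w, hw, fun f hf b => ?_⟩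
  have hfw : Matrix.vecMul w (m.map f) b = 0 := congrFun (hJ _ ⟨f, hf, rfl⟩) b
  simpa [Matrix.vecMul, dotProduct] using hfw

theorem sum_smul_ne_zero {k A ι : Type*} [CommSemiring k] [AddCommMonoid A]
    [Module k A] [Coalgebra k A] [Fintype ι] [DecidableEq ι] {m : Matrix ι ι A}
    (hm : IsComatrix k m) {w : ι → k} {j : ι} (hw : w j ≠ 0) : ∑ i, w i • m i j ≠ 0 := by
  intro h
  have hε := congrArg (Coalgebra.counit (R := k)) h
  simp only [map_sum, map_smul, hm.counit, Matrix.one_apply, map_zero] at hε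
  exact hw (by simpa using hε)

theorem kronecker {k H : Type*} [CommSemiring k] [Semiring H] [Bialgebra k H]
    {m : Matrix ι ι H} {n : Matrix κ κ H} (hm : IsComatrix k m) (hn : IsComatrix k n) :
    IsComatrix k (m ⊗ₖ n) where
  comul a b := by
    simp only [Matrix.kroneckerMap_apply, Bialgebra.comul_mul, hm.comul, hn.comul,
      Finset.sum_mul_sum, Algebra.TensorProduct.tmul_mul_tmul, Fintype.sum_prod_type]
  counit a b := by
    rw [Matrix.kroneckerMap_apply, Bialgebra.counit_mul, hm.counit, hn.counit,
      ← Matrix.one_kronecker_one, Matrix.kroneckerMap_apply]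

section Antipode

variable {k H : Type*} [CommSemiring k] [Semiring H] [HopfAlgebra k H] {m : Matrix ι ι H}

theorem map_antipode_mul (hm : IsComatrix k m) : m.map (HopfAlgebra.antipode k) * m = 1 := by
  ext i j
  have h := HopfAlgebra.mul_antipode_rTensor_comul_apply (R := k) (m i j)
  rw [hm.comul, hm.counit] at h
  simpa [Matrix.mul_apply, Matrix.one_apply, apply_ite (algebraMap k H)] using h

theorem mul_map_antipode (hm : IsComatrix k m) : m * m.map (HopfAlgebra.antipode k) = 1 := by
  ext i j
  have h := HopfAlgebra.mul_antipode_lTensor_comul_apply (R := k) (m i j)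
  rw [hm.comul, hm.counit] at h
  simpa [Matrix.mul_apply, Matrix.one_apply, apply_ite (algebraMap k H)] using h

-- Both sides are the entries of the inverse of the matrix `Δ(m)` over `H ⊗ H`.
theorem comul_antipode (hm : IsComatrix k m) (i j : ι) :
    Coalgebra.comul (R := k) (HopfAlgebra.antipode k (m i j)) =
      ∑ l, HopfAlgebra.antipode k (m l j) ⊗ₜ[k] HopfAlgebra.antipode k (m i l) := by
  let Δ : H →+* H ⊗[k] H := (Bialgebra.comulAlgHom k H).toRingHom
  let inl : H →+* H ⊗[k] H :=
    (Algebra.TensorProduct.includeLeft : H →ₐ[k] H ⊗[k] H).toRingHom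
  let inr : H →+* H ⊗[k] H :=
    (Algebra.TensorProduct.includeRight : H →ₐ[k] H ⊗[k] H).toRingHom
  let s := m.map (HopfAlgebra.antipode k)
  have hms (φ : H →+* H ⊗[k] H) : m.map φ * s.map φ = 1 := by
    rw [← Matrix.map_mul, hm.mul_map_antipode, Matrix.map_one _ (map_zero φ) (map_one φ)]
  have hΔ : m.map Δ = m.map inl * m.map inr := by
    ext i j
    simp [Δ, inl, inr, Matrix.mul_apply, hm.comul]
  have hleft : s.map Δ * m.map Δ = 1 := by
    rw [← Matrix.map_mul, hm.map_antipode_mul, Matrix.map_one _ (map_zero Δ) (map_one Δ)]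
  have hright : m.map Δ * (s.map inr * s.map inl) = 1 := by
    rw [hΔ, mul_assoc, ← mul_assoc (m.map inr), hms inr, one_mul, hms inl]
  have h := congrArg (fun t : Matrix ι ι (H ⊗[k] H) => t i j)
    (left_inv_eq_right_inv hleft hright)
  simpa [Δ, inl, inr, s, Matrix.mul_apply] using h

theorem sum_lTensor_mulRight_antipode (hm : IsComatrix k m) {z : ι → H}
    (hz : ∀ b, Coalgebra.comul (R := k) (z b) = ∑ c, z c ⊗ₜ[k] m c b) (b : ι) (t : H ⊗[k] H) :
    ∑ c, (LinearMap.mulRight k (m c b) ∘ₗ HopfAlgebra.antipode k).lTensor H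
        (Coalgebra.comul (R := k) (z c) * t) =
      (z b ⊗ₜ 1) * (HopfAlgebra.antipode k).lTensor H t := by
  induction t with
  | zero => simp only [map_zero, mul_zero, Finset.sum_const_zero]
  | add s t hs ht => simp only [map_add, mul_add, Finset.sum_add_distrib, hs, ht]
  | tmul x y =>
    have hinv (d : ι) : ∑ c, HopfAlgebra.antipode k (m d c) * m c b = (1 : Matrix ι ι H) d b :=
      congrArg (fun s : Matrix ι ι H => s d b) hm.map_antipode_mul
    calc _ = ∑ d, (z d * x) ⊗ₜ[k]
          (HopfAlgebra.antipode k y * ∑ c, HopfAlgebra.antipode k (m d c) * m c b) := by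
          simp only [hz, Finset.sum_mul, map_sum, Algebra.TensorProduct.tmul_mul_tmul,
            LinearMap.lTensor_tmul, LinearMap.comp_apply, LinearMap.mulRight_apply,
            HopfAlgebra.antipode_mul_antidistrib, mul_assoc, Finset.mul_sum,
            TensorProduct.tmul_sum]
          exact Finset.sum_comm
      _ = _ := by
          simp [hinv, Matrix.one_apply, TensorProduct.tmul_ite]

theorem sum_smul_mem_mul_map_antipode {ρ σ : Type*} [Fintype ρ] {C X : Submodule k H}
    (hm : IsComatrix k m) (hmC : ∀ i j, m i j ∈ C) {n : Matrix ρ σ H} {w : ρ × ι → k}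
    (hw : ∀ b, ∑ a, w a • (n ⊗ₖ m) a b ∈ X) (p : ι) (j : σ) :
    ∑ i, w (i, p) • n i j ∈ X * C.map (HopfAlgebra.antipode k) := by
  have hinv (q : ι) : ∑ l, m q l * HopfAlgebra.antipode k (m l p) = (1 : Matrix ι ι H) q p :=
    congrArg (fun t : Matrix ι ι H => t q p) hm.mul_map_antipode
  have h : ∑ i, w (i, p) • n i j =
      ∑ l, (∑ a, w a • (n ⊗ₖ m) a (j, l)) * HopfAlgebra.antipode k (m l p) := by
    simp only [Finset.sum_mul, smul_mul_assoc, Matrix.kroneckerMap_apply, mul_assoc]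
    rw [Finset.sum_comm]
    simp [← Finset.smul_sum, ← Finset.mul_sum, hinv, Fintype.sum_prod_type, Matrix.one_apply]
  rw [h]
  exact Submodule.sum_mem _ fun l _ =>
    Submodule.mul_mem_mul (hw (j, l)) (Submodule.mem_map_of_mem (hmC l p))

end Antipode

end IsComatrix

theorem exists_isComatrix_mem_span {k A : Type*} [Field k] [AddCommGroup A] [Module k A]
    [Coalgebra k A] (x : A) :
    ∃ (n : ℕ) (m : Matrix (Fin n) (Fin n) A), IsComatrix k m ∧
      x ∈ Submodule.span k (Set.range fun a : Fin n × Fin n => m a.1 a.2) ∧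
      ∀ i j, ∃ f g : A →ₗ[k] k,
        m i j = sliceRight g (Coalgebra.comul (sliceLeft f (Coalgebra.comul x))) := by
  obtain ⟨n, e, b, he, hb, hx⟩ := exists_linearIndependent_sum_tmul (Coalgebra.comul (R := k) x)
  obtain ⟨f, hf⟩ := exists_dual_family he
  obtain ⟨g, hg⟩ := exists_dual_family hb
  have hfx (i : Fin n) : sliceLeft (f i) (Coalgebra.comul x) = b i := by
    simp [hx, hf, Matrix.one_apply]
  have hgx (j : Fin n) : sliceRight (g j) (Coalgebra.comul x) = e j := by
    simp [hx, hg, Matrix.one_apply]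
  let m : Matrix (Fin n) (Fin n) A := .of fun i j => sliceRight (g j) (Coalgebra.comul (b i))
  have hm (j : Fin n) : Coalgebra.comul (R := k) (e j) = ∑ i, e i ⊗ₜ[k] m i j := by
    rw [← hgx, comul_sliceRight_comul, hx]
    simp [m]
  refine ⟨n, m, .of_linearIndependent he hm, ?_, fun i j => ⟨f i, g j, by rw [hfx]; rfl⟩⟩
  have hcounit (j : Fin n) : e j = ∑ i, Coalgebra.counit (R := k) (e i) • m i j := by
    have h := congrArg (TensorProduct.lid k A) (Coalgebra.rTensor_counit_comul (R := k) (e j))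
    simpa [hm] using h.symm
  have hxe : x = ∑ j, Coalgebra.counit (R := k) (b j) • e j := by
    have h := congrArg (TensorProduct.rid k A) (Coalgebra.lTensor_counit_comul (R := k) x)
    simpa [hx] using h.symm
  rw [hxe]
  refine Submodule.sum_mem _ fun j _ => Submodule.smul_mem _ _ ?_
  rw [hcounit]
  exact Submodule.sum_mem _ fun i _ => Submodule.smul_mem _ _ (Submodule.subset_span ⟨(i, j), rfl⟩)

end Comatrix

section Subcoalgebra

variable {k H : Type} [Field k] [Ring H] [HopfAlgebra k H] {C D : Submodule k H}

theorem isSubcoalgebra_iff_le_comap : IsSubcoalgebra k H C ↔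
    C ≤ (Submodule.map₂ (TensorProduct.mk k H H) C C).comap Coalgebra.comul := by
  simp only [IsSubcoalgebra, ← TensorProduct.range_mapIncl, TensorProduct.mapIncl]
  rfl

namespace IsSubcoalgebra

theorem sliceLeft_comul_mem (hC : IsSubcoalgebra k H C) (f : H →ₗ[k] k) {x : H} (hx : x ∈ C) :
    sliceLeft f (Coalgebra.comul x) ∈ C := by
  have h : Submodule.map₂ (TensorProduct.mk k H H) C C ≤ C.comap (sliceLeft f) :=
    Submodule.map₂_le.mpr fun _ _ _ hb => C.smul_mem _ hb
  exact h (isSubcoalgebra_iff_le_comap.mp hC hx)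

theorem sliceRight_comul_mem (hC : IsSubcoalgebra k H C) (f : H →ₗ[k] k) {x : H} (hx : x ∈ C) :
    sliceRight f (Coalgebra.comul x) ∈ C := by
  have h : Submodule.map₂ (TensorProduct.mk k H H) C C ≤ C.comap (sliceRight f) :=
    Submodule.map₂_le.mpr fun _ ha _ _ => C.smul_mem _ ha
  exact h (isSubcoalgebra_iff_le_comap.mp hC hx)

theorem mul (hC : IsSubcoalgebra k H C) (hD : IsSubcoalgebra k H D) :
    IsSubcoalgebra k H (C * D) := by
  rw [isSubcoalgebra_iff_le_comap] at *
  have hmul : Submodule.map₂ (TensorProduct.mk k H H) C C *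
      Submodule.map₂ (TensorProduct.mk k H H) D D ≤
      Submodule.map₂ (TensorProduct.mk k H H) (C * D) (C * D) := by
    simp only [Submodule.map₂_eq_span_image2, Submodule.span_mul_span,
      Submodule.span_le]
    rintro _ ⟨_, ⟨a, ha, b, hb, rfl⟩, _, ⟨c, hc, d, hd, rfl⟩, rfl⟩
    exact Submodule.subset_span
      ⟨a * c, Submodule.mul_mem_mul ha hc, b * d, Submodule.mul_mem_mul hb hd,
        (Algebra.TensorProduct.tmul_mul_tmul (R := k) a c b d).symm⟩
  refine Submodule.mul_le.mpr fun c hc d hd => ?_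
  rw [Submodule.mem_comap, Bialgebra.comul_mul]
  exact hmul (Submodule.mul_mem_mul (hC hc) (hD hd))

end IsSubcoalgebra

theorem exists_isComatrix_mem_span_forall_mem (x : H) :
    ∃ (n : ℕ) (m : Matrix (Fin n) (Fin n) H), IsComatrix k m ∧
      x ∈ Submodule.span k (Set.range fun a : Fin n × Fin n => m a.1 a.2) ∧
      ∀ D : Submodule k H, IsSubcoalgebra k H D → x ∈ D → ∀ i j, m i j ∈ D := by
  obtain ⟨n, m, hm, hx, hslice⟩ := exists_isComatrix_mem_span (k := k) x
  refine ⟨n, m, hm, hx, fun D hD hxD i j => ?_⟩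
  obtain ⟨f, g, hfg⟩ := hslice i j
  exact hfg ▸ hD.sliceRight_comul_mem g (hD.sliceLeft_comul_mem f hxD)

namespace IsComatrix

variable {ι : Type*} [Fintype ι] [DecidableEq ι] {m : Matrix ι ι H}

theorem isSubcoalgebra_span (hm : IsComatrix k m) :
    IsSubcoalgebra k H (Submodule.span k (Set.range fun a : ι × ι => m a.1 a.2)) := by
  rw [isSubcoalgebra_iff_le_comap]
  refine Submodule.span_le.mpr ?_
  rintro _ ⟨a, rfl⟩
  rw [SetLike.mem_coe, Submodule.mem_comap, hm.comul]
  exact Submodule.sum_mem _ fun l _ => Submodule.apply_mem_map₂ _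
    (Submodule.subset_span ⟨(a.1, l), rfl⟩) (Submodule.subset_span ⟨(l, a.2), rfl⟩)

theorem isCocomm_trace (hm : IsComatrix k m) : IsCocomm k H m.trace := by
  simp only [IsCocomm, Matrix.trace, Matrix.diag_apply, map_sum, hm.comul, TensorProduct.comm_tmul]
  exact Finset.sum_comm

end IsComatrix

theorem IsSubcoalgebra.map_antipode (hC : IsSubcoalgebra k H C) :
    IsSubcoalgebra k H (C.map (HopfAlgebra.antipode k)) := by
  rw [isSubcoalgebra_iff_le_comap, Submodule.map_le_iff_le_comap]
  intro x hx
  obtain ⟨n, m, hm, hxm, hmC⟩ := exists_isComatrix_mem_span_forall_mem (k := k) x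
  refine Submodule.span_le.mpr ?_ hxm
  rintro _ ⟨a, rfl⟩
  rw [SetLike.mem_coe, Submodule.mem_comap, Submodule.mem_comap, hm.comul_antipode]
  exact Submodule.sum_mem _ fun l _ => Submodule.apply_mem_map₂ _
    (Submodule.mem_map_of_mem (hmC C hC hx _ _)) (Submodule.mem_map_of_mem (hmC C hC hx _ _))

theorem IsSubcoalgebra.exists_isComatrix (hC : IsSubcoalgebra k H C) (hC0 : C ≠ ⊥) :
    ∃ (n : ℕ) (m : Matrix (Fin (n + 1)) (Fin (n + 1)) H),
      IsComatrix k m ∧ ∀ i j, m i j ∈ C := by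
  obtain ⟨x, hxC, hx⟩ := C.exists_mem_ne_zero_of_ne_bot hC0
  obtain ⟨n, m, hm, hxm, hmem⟩ := exists_isComatrix_mem_span_forall_mem (k := k) x
  cases n with
  | zero => exact absurd (by simpa [Set.range_eq_empty] using hxm) hx
  | succ n => exact ⟨n, m, hm, hmem C hC hxC⟩

theorem IsSimpleSubcoalgebra.le_of_mem (hD : IsSimpleSubcoalgebra k H D)
    (hC : IsSubcoalgebra k H C) {x : H} (hx : x ≠ 0) (hxD : x ∈ D) (hxC : x ∈ C) : D ≤ C := by
  obtain ⟨n, m, hm, hxm, hmem⟩ := exists_isComatrix_mem_span_forall_mem (k := k) x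
  have hspan {E : Submodule k H} (hE : IsSubcoalgebra k H E) (hxE : x ∈ E) :
      Submodule.span k (Set.range fun a : Fin n × Fin n => m a.1 a.2) ≤ E :=
    Submodule.span_le.mpr (Set.range_subset_iff.mpr fun _ => hmem E hE hxE _ _)
  have hbot : Submodule.span k (Set.range fun a : Fin n × Fin n => m a.1 a.2) ≠ ⊥ :=
    (Submodule.ne_bot_iff _).mpr ⟨x, hxm, hx⟩
  rw [← hD.2.2 _ (hspan hD.1 hxD) hm.isSubcoalgebra_span hbot]
  exact hspan hC hxC

end Subcoalgebra

section Invariant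

variable {k H : Type} [Field k] [Ring H] [HopfAlgebra k H] {K : Subalgebra k H} {Λ : H}
  {X : Submodule k H}

theorem IsComatrix.mem_mul_of_mul_integral_mem (hK : IsHopfSubalgebra k H K)
    (hΛ : IsIdempotentIntegral k H K Λ) (hX : IsSubcoalgebra k H X)
    {ι : Type*} [Fintype ι] [DecidableEq ι] {m : Matrix ι ι H} (hm : IsComatrix k m) {z : ι → H}
    (hz : ∀ b, Coalgebra.comul (R := k) (z b) = ∑ c, z c ⊗ₜ[k] m c b)
    (hzΛ : ∀ b, z b * Λ ∈ X) (b : ι) : z b ∈ X * K.toSubmodule := by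
  -- In Sweedler notation `t = z_b Λ₁ ⊗ S(Λ₂) = ∑_c (z_c Λ)₁ ⊗ S((z_c Λ)₂) m_cb`: the first form
  -- shows that `t` lies in `H ⊗ K`, the second that it lies in `X ⊗ H`.
  let t := (z b ⊗ₜ 1) * (HopfAlgebra.antipode k).lTensor H (Coalgebra.comul (R := k) Λ)
  have ht : LinearMap.mul' k H t = z b := by
    have hmul (s : H ⊗[k] H) :
        LinearMap.mul' k H ((z b ⊗ₜ 1) * s) = z b * LinearMap.mul' k H s := by
      induction s with
      | zero => simp only [mul_zero, map_zero]
      | add s s' hs hs' => simp only [mul_add, map_add, hs, hs']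
      | tmul x y => simp [mul_assoc]
    rw [hmul, HopfAlgebra.mul_antipode_lTensor_comul_apply, hΛ.2.1, map_one, mul_one]
  rw [← ht]
  refine mul'_mem_mul_of_mem_map₂ ?_ ?_
  · rw [show t = _ from (hm.sum_lTensor_mulRight_antipode hz b (Coalgebra.comul Λ)).symm]
    refine Submodule.sum_mem _ fun c _ => ?_
    rw [← Bialgebra.comul_mul]
    have h : Submodule.map₂ (TensorProduct.mk k H H) X X ≤
        (Submodule.map₂ (TensorProduct.mk k H H) X ⊤).comap
          ((LinearMap.mulRight k (m c b) ∘ₗ HopfAlgebra.antipode k).lTensor H) :=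
      Submodule.map₂_le.mpr fun _ hx _ _ => Submodule.apply_mem_map₂ _ hx Submodule.mem_top
    exact h (isSubcoalgebra_iff_le_comap.mp hX (hzΛ c))
  · have h : Submodule.map₂ (TensorProduct.mk k H H) K.toSubmodule K.toSubmodule ≤
        (Submodule.map₂ (TensorProduct.mk k H H) ⊤ K.toSubmodule).comap
          (LinearMap.mulLeft k (z b ⊗ₜ 1) ∘ₗ (HopfAlgebra.antipode k).lTensor H) :=
      Submodule.map₂_le.mpr fun x _ y hy => by
        simpa using Submodule.apply_mem_map₂ (TensorProduct.mk k H H)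
          (Submodule.mem_top (x := z b * x)) (hK.2 y hy)
    exact h (isSubcoalgebra_iff_le_comap.mp hK.1 hΛ.1)

theorem convMul_apply_eq_zero {f g : WithConv (H →ₗ[k] k)} (hX : IsSubcoalgebra k H X)
    (hf : ∀ x ∈ X, f x = 0) {x : H} (hx : x ∈ X) : (f * g) x = 0 := by
  have h : Submodule.map₂ (TensorProduct.mk k H H) X X ≤
      LinearMap.ker (LinearMap.mul' k k ∘ₗ TensorProduct.map f.ofConv g.ofConv) :=
    Submodule.map₂_le.mpr fun x hx y _ => by simp [hf x hx]
  exact h (isSubcoalgebra_iff_le_comap.mp hX hx)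

theorem convMul_apply_mul {P : Submodule k H} (hP : IsSubcoalgebra k H P)
    {f g : WithConv (H →ₗ[k] k)}
    (hf : ∀ h, ∀ a ∈ P, f (h * a) = f h * Coalgebra.counit (R := k) a)
    (hg : ∀ h, ∀ a ∈ P, g (h * a) = g h * Coalgebra.counit (R := k) a)
    (h : H) {a : H} (ha : a ∈ P) :
    (f * g) (h * a) = (f * g) h * Coalgebra.counit (R := k) a := by
  have hε : LinearMap.mul' k k (TensorProduct.map Coalgebra.counit Coalgebra.counit
      (Coalgebra.comul (R := k) a)) = Coalgebra.counit (R := k) a :=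
    LinearMap.congr_fun (congrArg WithConv.ofConv (one_mul (1 : WithConv (H →ₗ[k] k)))) a
  simp only [LinearMap.convMul_apply, Bialgebra.comul_mul]
  rw [mul'_map_mul_of_mem_map₂ hf hg _ (isSubcoalgebra_iff_le_comap.mp hP ha), hε]

/-- For subcoalgebras `X` and `P`, the non-unital convolution algebra of the functionals that
vanish on `X` and are invariant under right translation by `P`. For `X = CK` and `P = K`, this is
the algebra acting with trace zero. -/
def invariantAnnihilator {P : Submodule k H} (hX : IsSubcoalgebra k H X)
    (hP : IsSubcoalgebra k H P) : NonUnitalSubalgebra k (WithConv (H →ₗ[k] k)) where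
  carrier := {f | (∀ x ∈ X, f x = 0) ∧
    ∀ h, ∀ a ∈ P, f (h * a) = f h * Coalgebra.counit (R := k) a}
  add_mem' {f g} hf hg := ⟨fun x hx => by simp [hf.1 x hx, hg.1 x hx], fun h a ha => by
    simp [hf.2 h a ha, hg.2 h a ha, add_mul]⟩
  zero_mem' := by simp
  smul_mem' c f hf := ⟨fun x hx => by simp [hf.1 x hx], fun h a ha => by
    simp [hf.2 h a ha, mul_assoc]⟩
  mul_mem' hf hg := ⟨fun _ hx => convMul_apply_eq_zero hX hf.1 hx,
    fun h _ ha => convMul_apply_mul hP hf.2 hg.2 h ha⟩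

theorem IsComatrix.exists_ne_zero_forall_sum_smul_mem [CharZero k] (hK : IsHopfSubalgebra k H K)
    (hΛ : IsIdempotentIntegral k H K Λ) (hX : IsSubcoalgebra k H X)
    (hXK : X * K.toSubmodule ≤ X) {ι : Type*} [Fintype ι] [DecidableEq ι] [Nonempty ι]
    {m : Matrix ι ι H} (hm : IsComatrix k m) (hmΛ : m.trace * Λ ∈ X) :
    ∃ w : ι → k, w ≠ 0 ∧ ∀ b, ∑ a, w a • m a b ∈ X := by
  have htr : ∀ f ∈ invariantAnnihilator hX hK.1, f m.trace = 0 := fun f hf => by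
    simpa [hf.1 _ hmΛ, hΛ.2.1] using (hf.2 m.trace Λ hΛ.1).symm
  obtain ⟨w, hw, hJ⟩ := hm.exists_ne_zero_forall_apply_sum_smul_eq_zero htr
  refine ⟨w, hw, fun b => hXK (hm.mem_mul_of_mul_integral_mem hK hΛ hX
    (z := fun b => ∑ a, w a • m a b) (fun b => ?_) (fun b => ?_) b)⟩
  · simp only [map_sum, map_smul, hm.comul, sum_tmul, Finset.smul_sum, smul_tmul']
    exact Finset.sum_comm
  · by_contra hb
    obtain ⟨g, hg, hgX⟩ := Submodule.exists_le_ker_of_notMem hb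
    have hgΛ : WithConv.toConv (g ∘ₗ LinearMap.mulRight k Λ) ∈ invariantAnnihilator hX hK.1 := by
      refine ⟨fun x hx => hgX (hXK (Submodule.mul_mem_mul hx hΛ.1)), fun h a ha => ?_⟩
      simp [mul_assoc, (hΛ.2.2 a ha).1, mul_comm]
    exact hg (hJ _ hgΛ b)

end Invariant

section Conjugate

open scoped Kronecker

variable {k H : Type} [Field k] [Ring H] [HopfAlgebra k H] {K : Subalgebra k H} {Λ : H}
  {C D : Submodule k H}

theorem IsSimpleSubcoalgebra.le_mul_mul_map_antipode [CharZero k]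
    (hK : IsHopfSubalgebra k H K) (hΛ : IsIdempotentIntegral k H K Λ)
    (hC : IsSubcoalgebra k H C) (hC0 : C ≠ ⊥) (hD : IsSimpleSubcoalgebra k H D)
    (hDC : ∀ d ∈ D, IsCocomm k H d → ∀ c ∈ C, IsCocomm k H c →
      d * (c * Λ) = Coalgebra.counit (R := k) d • (c * Λ)) :
    D ≤ C * K.toSubmodule * C.map (HopfAlgebra.antipode k) := by
  let X := C * K.toSubmodule
  have hX : IsSubcoalgebra k H X := hC.mul hK.1
  have hXK : X * K.toSubmodule ≤ X := by
    rw [mul_assoc, K.isIdempotentElem_toSubmodule.eq]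
  obtain ⟨_, m, hm, hmD⟩ := hD.1.exists_isComatrix hD.2.1
  obtain ⟨_, n, hn, hnC⟩ := hC.exists_isComatrix hC0
  have hnt : n.trace ∈ C := Submodule.sum_mem _ fun i _ => hnC i i
  have hmt : m.trace ∈ D := Submodule.sum_mem _ fun i _ => hmD i i
  have hmnΛ : (m ⊗ₖ n).trace * Λ ∈ X := by
    rw [Matrix.trace_kronecker, mul_assoc, hDC _ hmt hm.isCocomm_trace _ hnt hn.isCocomm_trace]
    exact X.smul_mem _ (Submodule.mul_mem_mul hnt hΛ.1)
  obtain ⟨w, hw, hwX⟩ :=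
    (hm.kronecker hn).exists_ne_zero_forall_sum_smul_mem hK hΛ hX hXK hmnΛ
  obtain ⟨⟨j, p⟩, hjp⟩ := Function.ne_iff.mp hw
  exact hD.le_of_mem (hX.mul hC.map_antipode)
    (hm.sum_smul_ne_zero (w := fun i => w (i, p)) hjp)
    (Submodule.sum_mem _ fun i _ => D.smul_mem _ (hmD i j))
    (hn.sum_smul_mem_mul_map_antipode hnC hwX p j)

theorem statement_11_general [CharZero k] (hK : IsHopfSubalgebra k H K)
    (hΛ : IsIdempotentIntegral k H K Λ) (hC : IsSubcoalgebra k H C) (hC0 : C ≠ ⊥) :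
    conjK k H K Λ C ≤ C * K.toSubmodule * C.map (HopfAlgebra.antipode k) :=
  sSup_le fun _ hD => hD.1.le_mul_mul_map_antipode hK hΛ hC hC0 hD.2

end Conjugate

section Statements

variable [FiniteDimensional k H] [IsSemisimpleRing H]

/-- Corollary 32: `ᶜK ⊆ C·K·S(C)`, where `S` is the antipode
of `H` (so that `S(C)` is the simple subcoalgebra `C^*` dual to `C`). -/
theorem statement_11 (K : Subalgebra k H) (hK : IsHopfSubalgebra k H K)
    (Λ : H) (hΛ : IsIdempotentIntegral k H K Λ)
    (C : Submodule k H) (hC : IsSimpleSubcoalgebra k H C) :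
    conjK k H K Λ C ≤
      C * K.toSubmodule * Submodule.map (HopfAlgebra.antipode (R := k) (A := H)) C :=
  statement_11_general hK hΛ hC.1 hC.2.1

end Statements

end

end MackeyPaper
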